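/- Let s ∈ (1,3). For every x > 0, the function g(x) = x^{1−s/2} K_{(s−2)/4}(2πx²) satisfies −g′(x) = [4π x^{1−s}] · [x^{(s+2)/2} K_{(s+2)/4}(2πx²)]. Moreover, −g′ is a product of positive decreasing functions on (0,∞), hence −g′ is positive and decreasing on (0,∞); in particular g is positive, decreasing, and convex on (0,∞). -/

import Mathlib

/-!
Everything rests on the integral `H(ν, w) = ∫₀^∞ t^(ν-1) exp(-t - w/t) dt` (`w > 0`), which is
entire in `ν`, and on the identity `K_ν(2r) = r^(-ν) H(ν, r²) / 2` (`besselK_eq`).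

Differentiating under the integral gives `∂H(ν, w)/∂w = -H(ν - 1, w)`, and the substitution
`t ↦ w/t` gives `H(ν, w) = w^ν H(-ν, w)`. Together these show that `H(ν, ·)` solves the same
second-order linear equation as `L_{-ν}` and `w^ν L_ν`, where
`L_ν(w) = Σ wⁿ / (n! Γ(n + ν + 1))`. For `0 < Re ν < 1` the three Wronskians, which are constant,
are computed from the limits as `w → 0⁺`; with Euler's reflection formula this yields
`H(ν, w) sin(πν) = π (L_{-ν}(w) - w^ν L_ν(w))` (`macdonaldH_mul_sin_of_strip`). Both sides are
entire in `ν`, so the formula holds for all orders (`macdonaldH_mul_sin`), and the integer orders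
`0` and `1`, which occur for `s = 2`, follow by continuity in the order.

With `ν = (s - 2)/4` and `w = (π x²)²` one finds `g(x) = π^ν H(-ν, w) / 2` and
`h(x) = 2 π^(-ν) x^(1-s) H(ν + 1, w)`. The derivative formula is then the one for `H` combined with
the reflection, and since `H(a, ·)` is positive and decreasing and `1 - s < 0`, `h` is positive and
decreasing; hence `g` is convex.
-/

open Filter Set MeasureTheory
open scoped Real Classical

/-- The modified Bessel function of the first kind
`I_ν(z) = Σ_{n=0}^∞ (z/2)^{ν+2n} / (n! Γ(n+ν+1))`, with the principal branch of powers.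
(When `ν` is a negative integer the terms with `n + ν + 1 ≤ 0` vanish, since Mathlib's
`Complex.Gamma` vanishes at nonpositive integers, implementing the convention that the sum
starts at `n = -ν`.) -/
noncomputable def besselI (ν z : ℂ) : ℂ :=
  ∑' n : ℕ, (z / 2) ^ (ν + 2 * (n : ℂ)) / ((n.factorial : ℂ) * Complex.Gamma ((n : ℂ) + ν + 1))

/-- The modified Bessel function of the second kind:
`K_ν = (π / (2 sin (νπ))) (I_{-ν} - I_ν)` for non-integer `ν`, and for integer `ν` the limit
of this expression as the order tends to `ν`. -/

noncomputable def besselK (ν z : ℂ) : ℂ :=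
  if ∃ n : ℤ, ν = (n : ℂ) then
    limUnder (nhdsWithin ν {ν}ᶜ)
      (fun μ => ((Real.pi : ℂ) / (2 * Complex.sin (μ * (Real.pi : ℂ)))) *
        (besselI (-μ) z - besselI μ z))
  else ((Real.pi : ℂ) / (2 * Complex.sin (ν * (Real.pi : ℂ)))) * (besselI (-ν) z - besselI ν z)

/-! ### The entire series `L_ν` -/

/-- `1 / Γ(n + ν + 1)` is bounded uniformly in `n` and in `ν` in a disc: for `n ≥ R` the
functional equation makes it decrease in norm with `n`, and finitely many `n` remain. -/
lemma exists_bound_inv_Gamma (R : ℝ) : ∃ C : ℝ, 0 ≤ C ∧ ∀ (n : ℕ) (ν : ℂ), ‖ν‖ ≤ R →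
    ‖(Complex.Gamma ((n : ℂ) + ν + 1))⁻¹‖ ≤ C := by
  have hM : ∀ n : ℕ, ∃ M : ℝ, ∀ ν ∈ Metric.closedBall (0 : ℂ) R,
      ‖(Complex.Gamma ((n : ℂ) + ν + 1))⁻¹‖ ≤ M := fun n =>
    (isCompact_closedBall (0 : ℂ) R).exists_bound_of_continuousOn
      (Complex.differentiable_one_div_Gamma.continuous.comp
        (by fun_prop : Continuous fun ν : ℂ => (n : ℂ) + ν + 1)).continuousOn
  choose M hM using hM
  set N := ⌈R⌉₊
  refine ⟨∑ n ∈ Finset.range (N + 1), |M n|, Finset.sum_nonneg fun _ _ => abs_nonneg _, ?_⟩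
  have key : ∀ n : ℕ, n ≤ N → ∀ ν : ℂ, ‖ν‖ ≤ R →
      ‖(Complex.Gamma ((n : ℂ) + ν + 1))⁻¹‖ ≤ ∑ n ∈ Finset.range (N + 1), |M n| := by
    intro n hn ν hν
    refine (hM n ν (by simpa using hν)).trans ((le_abs_self _).trans ?_)
    exact Finset.single_le_sum (f := fun n => |M n|) (fun _ _ => abs_nonneg _)
      (Finset.mem_range.2 (by omega))
  intro n ν hν
  rcases le_total n N with h | h
  · exact key n h ν hν
  · induction n, h using Nat.le_induction with
    | base => exact key N le_rfl ν hν
    | succ n hn ih =>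
      refine le_trans ?_ ih
      have h1 : R ≤ n := (Nat.le_ceil R).trans (by exact_mod_cast hn)
      have h2 : (1 : ℝ) ≤ ‖(n : ℂ) + ν + 1‖ := by
        have : (n : ℝ) + 1 - ‖ν‖ ≤ ‖((n : ℂ) + 1) + ν‖ := by
          have := norm_sub_le_norm_add ((n : ℂ) + 1) ν
          have h3 : ‖((n : ℂ) + 1)‖ = n + 1 := by
            exact_mod_cast Complex.norm_natCast (n + 1)
          linarith
        rw [add_right_comm]
        linarith
      rw [Complex.one_div_Gamma_eq_self_mul_one_div_Gamma_add_one ((n : ℂ) + ν + 1), norm_mul]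
      have e : ((n + 1 : ℕ) : ℂ) + ν + 1 = (n : ℂ) + ν + 1 + 1 := by push_cast; ring
      rw [e]
      exact le_mul_of_one_le_left (norm_nonneg _) h2

/-- The entire series `L_ν(w) = Σ wⁿ / (n! Γ(n + ν + 1))`, so that
`I_ν(z) = (z/2)^ν L_ν(z²/4)`. -/
noncomputable def besselL (ν w : ℂ) : ℂ :=
  ∑' n : ℕ, w ^ n / (n.factorial : ℂ) * (Complex.Gamma ((n : ℂ) + ν + 1))⁻¹

lemma summable_besselL (ν w : ℂ) :
    Summable fun n : ℕ => w ^ n / (n.factorial : ℂ) * (Complex.Gamma ((n : ℂ) + ν + 1))⁻¹ := by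
  obtain ⟨C, -, hC⟩ := exists_bound_inv_Gamma ‖ν‖
  refine Summable.of_norm_bounded ((Real.summable_pow_div_factorial ‖w‖).mul_right C) fun n => ?_
  rw [norm_mul, norm_div, norm_pow, Complex.norm_natCast]
  gcongr
  exact hC n ν le_rfl

lemma besselL_zero (ν : ℂ) : besselL ν 0 = (Complex.Gamma (ν + 1))⁻¹ := by
  rw [besselL, tsum_eq_single 0]
  · simp
  · intro n hn
    simp [hn]

lemma differentiable_besselL_order (w : ℂ) : Differentiable ℂ fun ν => besselL ν w := by
  intro ν₀
  obtain ⟨C, -, hC⟩ := exists_bound_inv_Gamma (‖ν₀‖ + 1)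
  have : DifferentiableOn ℂ (fun ν => besselL ν w) (Metric.ball ν₀ 1) := by
    refine Complex.differentiableOn_tsum_of_summable_norm
      ((Real.summable_pow_div_factorial ‖w‖).mul_right C) (fun n => ?_) Metric.isOpen_ball ?_
    · have := Complex.differentiable_one_div_Gamma.comp
        (by fun_prop : Differentiable ℂ fun ν : ℂ => (n : ℂ) + ν + 1)
      exact (this.const_mul _).differentiableOn
    · intro n ν hν
      rw [norm_mul, norm_div, norm_pow, Complex.norm_natCast]
      gcongr
      apply hC n ν
      have h1 := norm_sub_norm_le ν ν₀
      rw [Metric.mem_ball, dist_eq_norm] at hν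
      linarith
  exact this.differentiableAt (Metric.isOpen_ball.mem_nhds (by simp))

/-- The termwise derivative of the series `L_ν` sums to `L_{ν+1}`. -/
lemma hasSum_besselL_deriv (ν w : ℂ) :
    HasSum (fun n : ℕ => (n * w ^ (n - 1)) / (n.factorial : ℂ) *
      (Complex.Gamma ((n : ℂ) + ν + 1))⁻¹) (besselL (ν + 1) w) := by
  rw [← hasSum_nat_add_iff' 1]
  simp only [Finset.range_one, Finset.sum_singleton, Nat.cast_zero, zero_mul, zero_div, sub_zero]
  refine (congrArg (fun f : ℕ → ℂ => HasSum f _) (funext fun n => ?_)).mpr (summable_besselL (ν + 1) w).hasSum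
  have h1 : ((n + 1 : ℕ) : ℂ) ≠ 0 := by exact_mod_cast Nat.succ_ne_zero n
  have h2 : (n.factorial : ℂ) ≠ 0 := by exact_mod_cast n.factorial_ne_zero
  congr 1
  · rw [Nat.factorial_succ, Nat.add_sub_cancel]
    push_cast at h1 ⊢
    field_simp
  · push_cast; ring_nf

lemma hasDerivAt_besselL (ν w : ℂ) : HasDerivAt (besselL ν) (besselL (ν + 1) w) w := by
  obtain ⟨C, hC0, hC⟩ := exists_bound_inv_Gamma ‖ν‖
  set r := ‖w‖ + 1
  rw [← (hasSum_besselL_deriv ν w).tsum_eq]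
  refine hasDerivAt_tsum_of_isPreconnected (t := Metric.ball (0 : ℂ) r)
    (u := fun n : ℕ => (n * r ^ (n - 1)) / (n.factorial : ℝ) * C)
    (g := fun (n : ℕ) (w : ℂ) =>
      w ^ n / (n.factorial : ℂ) * (Complex.Gamma ((n : ℂ) + ν + 1))⁻¹)
    (g' := fun (n : ℕ) (w : ℂ) => (n * w ^ (n - 1)) / (n.factorial : ℂ) *
      (Complex.Gamma ((n : ℂ) + ν + 1))⁻¹) (y₀ := w)
    ?_ Metric.isOpen_ball (convex_ball _ _).isPreconnected ?_ ?_ ?_ (summable_besselL ν w) ?_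
  · refine Summable.mul_right C ?_
    rw [← summable_nat_add_iff 1]
    refine (summable_congr fun n => ?_).2 (Real.summable_pow_div_factorial r)
    have h1 : ((n + 1 : ℕ) : ℝ) ≠ 0 := by exact_mod_cast Nat.succ_ne_zero n
    have h2 : (n.factorial : ℝ) ≠ 0 := by exact_mod_cast n.factorial_ne_zero
    rw [Nat.factorial_succ, Nat.add_sub_cancel]
    push_cast at h1 ⊢
    field_simp
  · intro n y _
    exact ((hasDerivAt_pow n y).div_const _).mul_const _
  · intro n y hy
    have hy' : ‖y‖ ≤ r := by simpa using (Metric.mem_ball.1 hy).le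
    rw [norm_mul, norm_div, norm_mul, norm_pow, Complex.norm_natCast, Complex.norm_natCast]
    gcongr
    exact hC n ν le_rfl
  all_goals simp [r]

lemma besselL_recurrence (ν w : ℂ) :
    ν * besselL ν w + w * besselL (ν + 1) w = besselL (ν - 1) w := by
  have h := ((summable_besselL ν w).hasSum.mul_left ν).add ((hasSum_besselL_deriv ν w).mul_left w)
  refine h.unique ?_
  refine (congrArg (fun f : ℕ → ℂ => HasSum f _) (funext fun n => ?_)).mpr (summable_besselL (ν - 1) w).hasSum
  have e : (n : ℂ) + (ν - 1) + 1 = n + ν := by ring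
  rw [e, Complex.one_div_Gamma_eq_self_mul_one_div_Gamma_add_one ((n : ℂ) + ν)]
  rcases n with _ | n
  · simp
  · rw [Nat.add_sub_cancel, pow_succ]
    ring

/-! ### The integral `H(ν, w)` -/

/-- The kernel `exp(-t - w/t)`, valued in `ℂ` so that its Mellin transform can be taken. -/
noncomputable def macdonaldKernel (w t : ℝ) : ℂ := (Real.exp (-t - w / t) : ℂ)

/-- `H(ν, w) = ∫₀^∞ t^(ν-1) exp(-t - w/t) dt`, the Mellin transform of the kernel. -/
noncomputable def macdonaldH (ν : ℂ) (w : ℝ) : ℂ := mellin (macdonaldKernel w) ν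

lemma norm_macdonaldKernel (w t : ℝ) : ‖macdonaldKernel w t‖ = Real.exp (-t - w / t) := by
  rw [macdonaldKernel, Complex.norm_real, Real.norm_eq_abs, Real.abs_exp]

lemma macdonaldKernel_continuousOn (w : ℝ) : ContinuousOn (macdonaldKernel w) (Ioi 0) := by
  unfold macdonaldKernel
  refine Complex.continuous_ofReal.comp_continuousOn (Real.continuous_exp.comp_continuousOn ?_)
  exact continuousOn_id.neg.sub (continuousOn_const.div continuousOn_id fun t ht => ne_of_gt ht)

lemma macdonaldKernel_isBigO_atTop {w : ℝ} (hw : 0 ≤ w) (a : ℝ) :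
    macdonaldKernel w =O[atTop] fun t : ℝ => t ^ (-a) := by
  have h1 : (fun t : ℝ => Real.exp (-t)) =O[atTop] fun t : ℝ => t ^ (-a) := by
    simpa using (isLittleO_exp_neg_mul_rpow_atTop one_pos (-a)).isBigO
  refine Asymptotics.IsBigO.trans (Asymptotics.IsBigO.of_bound 1 ?_) h1
  filter_upwards [eventually_gt_atTop 0] with t ht
  rw [norm_macdonaldKernel, one_mul, Real.norm_eq_abs, Real.abs_exp]
  gcongr
  have := div_nonneg hw ht.le
  linarith

lemma macdonaldKernel_isBigO_zero {w : ℝ} (hw : 0 < w) (b : ℝ) :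
    macdonaldKernel w =O[nhdsWithin 0 (Ioi 0)] fun t : ℝ => t ^ (-b) := by
  have h1 : (fun t : ℝ => Real.exp (-w * t⁻¹)) =O[nhdsWithin 0 (Ioi 0)]
      fun t : ℝ => (t⁻¹) ^ b :=
    (isLittleO_exp_neg_mul_rpow_atTop hw b).isBigO.comp_tendsto tendsto_inv_nhdsGT_zero
  refine Asymptotics.IsBigO.trans (Asymptotics.IsBigO.of_bound 1 ?_) (h1.congr' .rfl ?_)
  · filter_upwards [self_mem_nhdsWithin] with t ht
    rw [norm_macdonaldKernel, one_mul, Real.norm_eq_abs, Real.abs_exp]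
    gcongr
    have : (0 : ℝ) < t := ht
    rw [div_eq_mul_inv]
    linarith
  · filter_upwards [self_mem_nhdsWithin] with t ht
    rw [Real.rpow_neg (le_of_lt ht), Real.inv_rpow (le_of_lt ht)]

lemma macdonaldKernel_locallyIntegrable (w : ℝ) :
    LocallyIntegrableOn (macdonaldKernel w) (Ioi 0) :=
  (macdonaldKernel_continuousOn w).locallyIntegrableOn measurableSet_Ioi

lemma mellinConvergent_macdonaldKernel {w : ℝ} (hw : 0 < w) (ν : ℂ) :
    MellinConvergent (macdonaldKernel w) ν :=
  mellinConvergent_of_isBigO_rpow (macdonaldKernel_locallyIntegrable w)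
    (macdonaldKernel_isBigO_atTop hw.le (ν.re + 1)) (by linarith)
    (macdonaldKernel_isBigO_zero hw (ν.re - 1)) (by linarith)

lemma differentiable_macdonaldH_order {w : ℝ} (hw : 0 < w) :
    Differentiable ℂ fun ν => macdonaldH ν w := fun ν =>
  mellin_differentiableAt_of_isBigO_rpow (macdonaldKernel_locallyIntegrable w)
    (macdonaldKernel_isBigO_atTop hw.le (ν.re + 1)) (by linarith)
    (macdonaldKernel_isBigO_zero hw (ν.re - 1)) (by linarith)

/-- The reflection `H(ν, w) = w^ν H(-ν, w)`, from the invariance of the kernel under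
`t ↦ w / t`. -/
lemma macdonaldH_reflect {w : ℝ} (hw : 0 < w) (ν : ℂ) :
    macdonaldH ν w = (w : ℂ) ^ ν * macdonaldH (-ν) w := by
  have h : macdonaldKernel w = fun t => (fun u => macdonaldKernel w (w * u)) t⁻¹ := by
    funext t
    simp only [macdonaldKernel]
    congr 2
    rcases eq_or_ne t 0 with rfl | ht
    · simp
    · field_simp
      ring
  have e : macdonaldH ν w = mellin (fun t => (fun u => macdonaldKernel w (w * u)) t⁻¹) ν := by
    rw [← h]; rfl
  rw [e, mellin_comp_inv (fun u => macdonaldKernel w (w * u)), mellin_comp_mul_left _ _ hw, neg_neg, smul_eq_mul, macdonaldH]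

lemma hasDerivAt_macdonaldH {w : ℝ} (hw : 0 < w) (ν : ℂ) :
    HasDerivAt (fun w : ℝ => macdonaldH ν w) (-macdonaldH (ν - 1) w) w := by
  have hhalf : 0 < w / 2 := half_pos hw
  have key := hasDerivAt_integral_of_dominated_loc_of_deriv_le (μ := volume.restrict (Ioi (0 : ℝ)))
    (F := fun (w : ℝ) (t : ℝ) => (t : ℂ) ^ (ν - 1) • macdonaldKernel w t)
    (F' := fun (w : ℝ) (t : ℝ) => -((t : ℂ) ^ (ν - 1 - 1) • macdonaldKernel w t))
    (x₀ := w) (s := Ioi (w / 2))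
    (bound := fun t => ‖(t : ℂ) ^ (ν - 1 - 1) • macdonaldKernel (w / 2) t‖)
    (Ioi_mem_nhds (by linarith)) ?_ (mellinConvergent_macdonaldKernel hw ν) ?_ ?_ ?_ ?_
  · have := key.2
    rw [integral_neg] at this
    exact this
  · filter_upwards [Ioi_mem_nhds hw] with u hu
    exact (mellinConvergent_macdonaldKernel hu ν).aestronglyMeasurable
  · exact (mellinConvergent_macdonaldKernel hw (ν - 1)).aestronglyMeasurable.neg
  · refine (ae_restrict_mem measurableSet_Ioi).mono fun t (ht : 0 < t) u (hu : w / 2 < u) => ?_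
    rw [norm_neg, norm_smul, norm_smul, norm_macdonaldKernel, norm_macdonaldKernel]
    gcongr
  · exact (mellinConvergent_macdonaldKernel hhalf (ν - 1)).norm
  · refine (ae_restrict_mem measurableSet_Ioi).mono fun t (ht : 0 < t) u _ => ?_
    have h1 : HasDerivAt (fun u : ℝ => Real.exp (-t - u / t)) (Real.exp (-t - u / t) * -(1 / t)) u :=
      (((hasDerivAt_id u).div_const t).const_sub (-t)).exp
    have h2 := (h1.ofReal_comp).const_smul ((t : ℂ) ^ (ν - 1))
    refine h2.congr_deriv ?_
    have ht' : (t : ℂ) ≠ 0 := by exact_mod_cast ht.ne'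
    rw [Complex.cpow_sub (ν - 1) 1 ht', Complex.cpow_one, macdonaldKernel]
    simp only [smul_eq_mul]
    push_cast
    ring

lemma tendsto_macdonaldH_zero {ν : ℂ} (hν : 0 < ν.re) :
    Tendsto (macdonaldH ν) (nhdsWithin 0 (Ioi 0)) (nhds (Complex.Gamma ν)) := by
  rw [Complex.Gamma_eq_integral hν, Complex.GammaIntegral]
  have hΓ := Complex.GammaIntegral_convergent hν
  unfold macdonaldH mellin
  refine tendsto_integral_filter_of_dominated_convergence
    (fun t : ℝ => ‖((-t).exp : ℂ) * (t : ℂ) ^ (ν - 1)‖) ?_ ?_ hΓ.norm ?_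
  · filter_upwards [self_mem_nhdsWithin] with w hw
    exact (mellinConvergent_macdonaldKernel hw ν).aestronglyMeasurable
  · filter_upwards [self_mem_nhdsWithin] with w (hw : 0 < w)
    refine (ae_restrict_mem measurableSet_Ioi).mono fun t (ht : 0 < t) => ?_
    rw [norm_smul, norm_mul, mul_comm, norm_macdonaldKernel, Complex.norm_real, Real.norm_eq_abs,
      Real.abs_exp]
    gcongr
    have := div_pos hw ht
    linarith
  · refine (ae_restrict_mem measurableSet_Ioi).mono fun t (ht : 0 < t) => ?_
    have : Continuous fun w : ℝ => (t : ℂ) ^ (ν - 1) • macdonaldKernel w t := by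
      unfold macdonaldKernel
      fun_prop
    have h := (this.tendsto 0).mono_left (nhdsWithin_le_nhds (s := Ioi 0))
    simpa [macdonaldKernel, mul_comm] using h

/-! ### Identifying the integral with the series -/

/-- Any two solutions `(y, p)`, `(u, q)` of the linear system `y' = a p`, `p' = b y` on `(0, ∞)`
have a constant Wronskian `y q - p u`, hence equal to its limit at `0⁺`. -/
lemma wronskian_eq_of_tendsto {a b y p u q : ℝ → ℂ} {c : ℂ}
    (hy : ∀ w, 0 < w → HasDerivAt y (a w * p w) w) (hp : ∀ w, 0 < w → HasDerivAt p (b w * y w) w)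
    (hu : ∀ w, 0 < w → HasDerivAt u (a w * q w) w) (hq : ∀ w, 0 < w → HasDerivAt q (b w * u w) w)
    (hlim : Tendsto (fun w => y w * q w - p w * u w) (nhdsWithin 0 (Ioi 0)) (nhds c))
    {w : ℝ} (hw : 0 < w) : y w * q w - p w * u w = c := by
  have hD : ∀ v, 0 < v → HasDerivAt (fun w => y w * q w - p w * u w) 0 v := fun v hv =>
    (((hy v hv).mul (hq v hv)).sub ((hp v hv).mul (hu v hv))).congr_deriv (by ring)
  have hconst : ∀ v ∈ Ioi (0 : ℝ), y v * q v - p v * u v = y w * q w - p w * u w := fun v hv =>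
    isOpen_Ioi.is_const_of_deriv_eq_zero isPreconnected_Ioi
      (fun x hx => (hD x hx).differentiableAt.differentiableWithinAt)
      (fun x hx => (hD x hx).deriv) hv hw
  refine tendsto_nhds_unique (tendsto_const_nhds.congr' ?_) hlim
  filter_upwards [self_mem_nhdsWithin] with v hv
  exact (hconst v hv).symm

lemma hasDerivAt_besselL_ofReal (ν : ℂ) (w : ℝ) :
    HasDerivAt (fun w : ℝ => besselL ν w) (besselL (ν + 1) w) w :=
  (hasDerivAt_besselL ν w).comp_ofReal

lemma tendsto_besselL_zero (ν : ℂ) :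
    Tendsto (fun w : ℝ => besselL ν w) (nhdsWithin 0 (Ioi 0))
      (nhds (Complex.Gamma (ν + 1))⁻¹) := by
  have h := (hasDerivAt_besselL_ofReal ν 0).continuousAt.tendsto
  rw [Complex.ofReal_zero, besselL_zero] at h
  exact h.mono_left nhdsWithin_le_nhds

lemma hasDerivAt_cpow_mul_besselL (ν : ℂ) {w : ℝ} (hw : 0 < w) :
    HasDerivAt (fun w : ℝ => (w : ℂ) ^ ν * besselL ν w)
      ((w : ℂ) ^ (ν - 1) * besselL (ν - 1) w) w := by
  have hw' : (w : ℂ) ≠ 0 := by exact_mod_cast hw.ne'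
  have h1 : HasDerivAt (fun w : ℝ => (w : ℂ) ^ ν) (ν * (w : ℂ) ^ (ν - 1)) w := by
    have := (hasDerivAt_id (w : ℂ)).cpow_const (c := ν) (Or.inl (by simpa using hw))
    simpa using this.comp_ofReal
  refine (h1.mul (hasDerivAt_besselL_ofReal ν w)).congr_deriv ?_
  rw [← besselL_recurrence ν w, Complex.cpow_sub _ 1 hw', Complex.cpow_one]
  field_simp

lemma tendsto_cpow_zero {ν : ℂ} (hν : 0 < ν.re) :
    Tendsto (fun w : ℝ => (w : ℂ) ^ ν) (nhdsWithin 0 (Ioi 0)) (nhds 0) := by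
  have h := (Complex.continuousAt_ofReal_cpow_const 0 ν (Or.inl hν)).tendsto
  have h0 : ν ≠ 0 := by rintro rfl; simp at hν
  rw [Complex.ofReal_zero, Complex.zero_cpow h0] at h
  exact h.mono_left nhdsWithin_le_nhds

/-- The connection formula `H(ν, w) sin(πν) = π (L_{-ν}(w) - w^ν L_ν(w))` for `0 < Re ν < 1`.
The strip is where `H(ν, w)` and `H(1 - ν, w)` both have finite limits as `w → 0⁺`. -/
lemma macdonaldH_mul_sin_of_strip {w : ℝ} (hw : 0 < w) {ν : ℂ} (h0 : 0 < ν.re) (h1 : ν.re < 1) :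
    macdonaldH ν w * Complex.sin (π * ν) =
      π * (besselL (-ν) w - (w : ℂ) ^ ν * besselL ν w) := by
  have h1' : 0 < (1 - ν).re := by simpa using h1
  have hΓ0 := Complex.Gamma_ne_zero_of_re_pos h0
  have hΓ1 := Complex.Gamma_ne_zero_of_re_pos h1'
  have hcancel : ∀ v : ℝ, 0 < v → (v : ℂ) ^ (ν - 1) * (v : ℂ) ^ (1 - ν) = 1 := fun v hv => by
    have hv' : (v : ℂ) ≠ 0 := by exact_mod_cast hv.ne'
    rw [← Complex.cpow_add _ _ hv']
    simp
  have hcancel' : ∀ v : ℝ, 0 < v → (v : ℂ) ^ (-ν) * (v : ℂ) ^ ν = 1 := fun v hv => by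
    have hv' : (v : ℂ) ≠ 0 := by exact_mod_cast hv.ne'
    rw [← Complex.cpow_add _ _ hv']
    simp
  -- All three pairs `(y, p)`, `p = w^(1-ν) y'`, solve the system
  -- `y' = w^(ν-1) p`, `p' = w^(-ν) y`: `H(ν, ·)` by differentiation and reflection, and the
  -- two series `L_{-ν}`, `w^ν L_ν` by the recurrence.
  have hy : ∀ v : ℝ, 0 < v → HasDerivAt (fun v : ℝ => macdonaldH ν v)
      ((v : ℂ) ^ (ν - 1) * -macdonaldH (1 - ν) v) v := fun v hv => by
    refine (hasDerivAt_macdonaldH hv ν).congr_deriv ?_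
    rw [macdonaldH_reflect hv (ν - 1), neg_sub, mul_neg]
  have hp : ∀ v : ℝ, 0 < v → HasDerivAt (fun v : ℝ => -macdonaldH (1 - ν) v)
      ((v : ℂ) ^ (-ν) * macdonaldH ν v) v := fun v hv => by
    refine (hasDerivAt_macdonaldH hv (1 - ν)).neg.congr_deriv ?_
    rw [neg_neg, show 1 - ν - 1 = -ν by ring, macdonaldH_reflect hv (-ν), neg_neg]
  have hy1 : ∀ v : ℝ, 0 < v → HasDerivAt (fun v : ℝ => besselL (-ν) v)
      ((v : ℂ) ^ (ν - 1) * ((v : ℂ) ^ (1 - ν) * besselL (1 - ν) v)) v := fun v hv => by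
    refine (hasDerivAt_besselL_ofReal (-ν) v).congr_deriv ?_
    rw [← mul_assoc, hcancel v hv, one_mul, neg_add_eq_sub]
  have hp1 : ∀ v : ℝ, 0 < v → HasDerivAt (fun v : ℝ => (v : ℂ) ^ (1 - ν) * besselL (1 - ν) v)
      ((v : ℂ) ^ (-ν) * besselL (-ν) v) v := fun v hv => by
    refine (hasDerivAt_cpow_mul_besselL (1 - ν) hv).congr_deriv ?_
    rw [show 1 - ν - 1 = -ν by ring]
  have hy2 : ∀ v : ℝ, 0 < v → HasDerivAt (fun v : ℝ => (v : ℂ) ^ ν * besselL ν v)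
      ((v : ℂ) ^ (ν - 1) * besselL (ν - 1) v) v := fun v hv => hasDerivAt_cpow_mul_besselL ν hv
  have hp2 : ∀ v : ℝ, 0 < v → HasDerivAt (fun v : ℝ => besselL (ν - 1) v)
      ((v : ℂ) ^ (-ν) * ((v : ℂ) ^ ν * besselL ν v)) v := fun v hv => by
    refine (hasDerivAt_besselL_ofReal (ν - 1) v).congr_deriv ?_
    rw [← mul_assoc, hcancel' v hv, one_mul, sub_add_cancel]
  have ly := tendsto_macdonaldH_zero h0
  have lp := (tendsto_macdonaldH_zero h1').neg
  have ly1 := tendsto_besselL_zero (-ν)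
  have lp1 := (tendsto_cpow_zero h1').mul (tendsto_besselL_zero (1 - ν))
  have ly2 := (tendsto_cpow_zero h0).mul (tendsto_besselL_zero ν)
  have lp2 := tendsto_besselL_zero (ν - 1)
  rw [neg_add_eq_sub] at ly1
  rw [sub_add_cancel] at lp2
  rw [zero_mul] at lp1 ly2
  -- The Wronskians of `H` with either series are `1`; that of the two series is `sin(πν)/π`.
  have W1 := wronskian_eq_of_tendsto hy hp hy1 hp1 ((ly.mul lp1).sub (lp.mul ly1)) hw
  have W2 := wronskian_eq_of_tendsto hy hp hy2 hp2 ((ly.mul lp2).sub (lp.mul ly2)) hw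
  have W3 := wronskian_eq_of_tendsto hy1 hp1 hy2 hp2 ((ly1.mul lp2).sub (lp1.mul ly2)) hw
  rw [mul_zero, zero_sub, neg_mul (Complex.Gamma (1 - ν)), neg_neg, mul_inv_cancel₀ hΓ1] at W1
  rw [mul_zero, sub_zero, mul_inv_cancel₀ hΓ0] at W2
  rw [zero_mul, sub_zero, ← mul_inv, mul_comm (Complex.Gamma (1 - ν)),
    Complex.Gamma_mul_Gamma_one_sub, inv_div] at W3
  have hπ : (π : ℂ) ≠ 0 := by exact_mod_cast Real.pi_ne_zero
  rw [eq_div_iff hπ] at W3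
  linear_combination (-macdonaldH ν w) * W3 + π * besselL (-ν) w * W2
    - π * ((w : ℂ) ^ ν * besselL ν w) * W1

/-- The connection formula for every complex order: both sides are entire in `ν` and agree near
`ν = 1/2`. -/
lemma macdonaldH_mul_sin {w : ℝ} (hw : 0 < w) (ν : ℂ) :
    macdonaldH ν w * Complex.sin (π * ν) =
      π * (besselL (-ν) w - (w : ℂ) ^ ν * besselL ν w) := by
  have hw' : (w : ℂ) ≠ 0 := by exact_mod_cast hw.ne'
  have hL : Differentiable ℂ fun ν => macdonaldH ν w * Complex.sin (π * ν) :=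
    (differentiable_macdonaldH_order hw).mul (by fun_prop)
  have hpow : Differentiable ℂ fun ν : ℂ => (w : ℂ) ^ ν := fun ν =>
    differentiableAt_id.const_cpow (Or.inl hw')
  have hR : Differentiable ℂ fun ν =>
      (π : ℂ) * (besselL (-ν) w - (w : ℂ) ^ ν * besselL ν w) :=
    (((differentiable_besselL_order w).comp differentiable_neg).sub
      (hpow.mul (differentiable_besselL_order w))).const_mul _
  have hU : {μ : ℂ | 0 < μ.re ∧ μ.re < 1} ∈ nhds (1 / 2 : ℂ) := by
    refine ((isOpen_lt continuous_const Complex.continuous_re).inter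
      (isOpen_lt Complex.continuous_re continuous_const)).mem_nhds ?_
    constructor <;> norm_num
  refine congrFun (AnalyticOnNhd.eq_of_eventuallyEq (𝕜 := ℂ) (z₀ := 1 / 2)
    (fun z _ => hL.analyticAt z) (fun z _ => hR.analyticAt z) ?_) ν
  filter_upwards [hU] with μ hμ
  exact macdonaldH_mul_sin_of_strip hw hμ.1 hμ.2

lemma besselI_eq {r : ℝ} (hr : 0 < r) (ν : ℂ) :
    besselI ν ((2 * r : ℝ) : ℂ) = (r : ℂ) ^ ν * besselL ν ((r ^ 2 : ℝ) : ℂ) := by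
  have hr' : (r : ℂ) ≠ 0 := by exact_mod_cast hr.ne'
  rw [besselI, besselL, ← tsum_mul_left]
  refine tsum_congr fun n => ?_
  have e : ((2 * r : ℝ) : ℂ) / 2 = r := by push_cast; ring
  have e2 : (r : ℂ) ^ (ν + 2 * (n : ℂ)) = (r : ℂ) ^ ν * ((r ^ 2 : ℝ) : ℂ) ^ n := by
    rw [Complex.cpow_add _ _ hr', show (2 * (n : ℂ)) = ((2 * n : ℕ) : ℂ) by push_cast; ring,
      Complex.cpow_natCast, pow_mul]
    push_cast
    rfl
  rw [e, e2]
  field_simp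

lemma besselK_formula {r : ℝ} (hr : 0 < r) {ν : ℂ} (hν : ¬ ∃ n : ℤ, ν = n) :
    ((π : ℂ) / (2 * Complex.sin (ν * (π : ℂ)))) *
        (besselI (-ν) ((2 * r : ℝ) : ℂ) - besselI ν ((2 * r : ℝ) : ℂ)) =
      (r : ℂ) ^ (-ν) / 2 * macdonaldH ν (r ^ 2) := by
  have hr' : (r : ℂ) ≠ 0 := by exact_mod_cast hr.ne'
  have hπ : (π : ℂ) ≠ 0 := by exact_mod_cast Real.pi_ne_zero
  have hsin : Complex.sin (ν * π) ≠ 0 := fun h => by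
    obtain ⟨k, hk⟩ := Complex.sin_eq_zero_iff.1 h
    exact hν ⟨k, mul_right_cancel₀ hπ hk⟩
  have key := macdonaldH_mul_sin (pow_pos hr 2) ν
  rw [mul_comm (π : ℂ) ν] at key
  have e : (r : ℂ) ^ (-ν) * ((r ^ 2 : ℝ) : ℂ) ^ ν = (r : ℂ) ^ ν := by
    have : ((r ^ 2 : ℝ) : ℂ) ^ ν = (r : ℂ) ^ ν * (r : ℂ) ^ ν := by
      rw [pow_two, Complex.ofReal_mul, Complex.mul_cpow_ofReal_nonneg hr.le hr.le]
    rw [this, ← mul_assoc, ← Complex.cpow_add _ _ hr', neg_add_cancel, Complex.cpow_zero, one_mul]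
  rw [besselI_eq hr, besselI_eq hr, div_mul_eq_mul_div, div_eq_iff (by simpa using hsin)]
  linear_combination (-(r : ℂ) ^ (-ν)) * key + π * besselL ν ((r ^ 2 : ℝ) : ℂ) * e

/-- `K_ν(2r) = r^(-ν) H(ν, r²) / 2` for every complex order. At integer `ν` the limit defining
`K_ν` exists because the right-hand side is continuous in `ν`. -/
lemma besselK_eq {r : ℝ} (hr : 0 < r) (ν : ℂ) :
    besselK ν ((2 * r : ℝ) : ℂ) = (r : ℂ) ^ (-ν) / 2 * macdonaldH ν (r ^ 2) := by
  have hr' : (r : ℂ) ≠ 0 := by exact_mod_cast hr.ne'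
  unfold besselK
  split_ifs with h
  · obtain ⟨n, rfl⟩ := h
    refine Tendsto.limUnder_eq ?_
    have hcont : Continuous fun μ : ℂ => (r : ℂ) ^ (-μ) / 2 * macdonaldH μ (r ^ 2) :=
      ((continuous_neg.const_cpow (Or.inl hr')).div_const 2).mul
        (differentiable_macdonaldH_order (pow_pos hr 2)).continuous
    refine ((hcont.tendsto (n : ℂ)).mono_left nhdsWithin_le_nhds).congr' ?_
    filter_upwards [self_mem_nhdsWithin,
      nhdsWithin_le_nhds (Metric.ball_mem_nhds (n : ℂ) one_pos)] with μ hμ hball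
    refine (besselK_formula hr ?_).symm
    rintro ⟨m, rfl⟩
    rw [Metric.mem_ball, dist_eq_norm, ← Int.cast_sub, Complex.norm_intCast] at hball
    have hlt : |m - n| < 1 := by exact_mod_cast hball
    rw [Int.abs_lt_one_iff, sub_eq_zero] at hlt
    exact hμ (by simp [hlt])
  · exact besselK_formula hr h

/-! ### Real order, and the Bessel function on the positive axis -/

/-- The function `H(a, w)` for real `a`, as a real integral. -/
noncomputable def macdonaldR (a w : ℝ) : ℝ :=
  ∫ t in Ioi (0 : ℝ), t ^ (a - 1) * Real.exp (-t - w / t)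

lemma macdonaldR_integrand (a w : ℝ) {t : ℝ} (ht : 0 < t) :
    (t : ℂ) ^ ((a : ℂ) - 1) • macdonaldKernel w t =
      ((t ^ (a - 1) * Real.exp (-t - w / t) : ℝ) : ℂ) := by
  rw [Complex.ofReal_mul, Complex.ofReal_cpow ht.le, macdonaldKernel, smul_eq_mul]
  push_cast
  rfl

lemma macdonaldH_ofReal (a w : ℝ) : macdonaldH a w = (macdonaldR a w : ℂ) := by
  rw [macdonaldH, mellin, macdonaldR, ← integral_complex_ofReal]
  exact setIntegral_congr_fun measurableSet_Ioi fun t ht => macdonaldR_integrand a w ht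

lemma integrableOn_macdonaldR (a : ℝ) {w : ℝ} (hw : 0 < w) :
    IntegrableOn (fun t : ℝ => t ^ (a - 1) * Real.exp (-t - w / t)) (Ioi 0) := by
  have h : IntegrableOn (fun t : ℝ => ((t ^ (a - 1) * Real.exp (-t - w / t) : ℝ) : ℂ)) (Ioi 0) :=
    (mellinConvergent_macdonaldKernel hw a).congr_fun
      (fun t ht => macdonaldR_integrand a w ht) measurableSet_Ioi
  exact h.re

lemma macdonaldR_pos (a : ℝ) {w : ℝ} (hw : 0 < w) : 0 < macdonaldR a w := by
  rw [macdonaldR, setIntegral_pos_iff_support_of_nonneg_ae _ (integrableOn_macdonaldR a hw)]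
  · have : Ioi (0 : ℝ) ⊆ Function.support
        (fun t : ℝ => t ^ (a - 1) * Real.exp (-t - w / t)) ∩ Ioi 0 := fun t (ht : 0 < t) =>
      ⟨(mul_pos (Real.rpow_pos_of_pos ht _) (Real.exp_pos _)).ne', ht⟩
    refine lt_of_lt_of_le ?_ (measure_mono this)
    simp
  · refine (ae_restrict_mem measurableSet_Ioi).mono fun t (ht : 0 < t) => ?_
    exact (mul_pos (Real.rpow_pos_of_pos ht _) (Real.exp_pos _)).le

lemma macdonaldR_anti (a : ℝ) {v w : ℝ} (hv : 0 < v) (hvw : v ≤ w) :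
    macdonaldR a w ≤ macdonaldR a v := by
  refine setIntegral_mono_on (integrableOn_macdonaldR a (hv.trans_le hvw))
    (integrableOn_macdonaldR a hv) measurableSet_Ioi fun t (ht : 0 < t) => ?_
  gcongr

lemma macdonaldR_reflect (a : ℝ) {w : ℝ} (hw : 0 < w) :
    macdonaldR a w = w ^ a * macdonaldR (-a) w := by
  have h := macdonaldH_reflect hw (a : ℂ)
  rw [← Complex.ofReal_neg, macdonaldH_ofReal, macdonaldH_ofReal,
    ← Complex.ofReal_cpow hw.le] at h
  exact_mod_cast h

lemma hasDerivAt_macdonaldR (a : ℝ) {w : ℝ} (hw : 0 < w) :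
    HasDerivAt (macdonaldR a) (-macdonaldR (a - 1) w) w := by
  have h := hasDerivAt_macdonaldH hw (a : ℂ)
  have e : (a : ℂ) - 1 = ((a - 1 : ℝ) : ℂ) := by push_cast; rfl
  rw [e, macdonaldH_ofReal] at h
  have h2 := Complex.reCLM.hasFDerivAt.comp_hasDerivAt w h
  simpa [Function.comp_def, macdonaldH_ofReal] using h2

lemma besselK_re_eq (a : ℝ) {x : ℝ} (hx : 0 < x) :
    (besselK (a : ℂ) ((2 * π * x ^ 2 : ℝ) : ℂ)).re =
      (π * x ^ 2) ^ (-a) / 2 * macdonaldR a ((π * x ^ 2) ^ 2) := by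
  have hr : 0 < π * x ^ 2 := by positivity
  have h := besselK_eq hr (a : ℂ)
  rw [← mul_assoc, macdonaldH_ofReal, ← Complex.ofReal_neg, ← Complex.ofReal_cpow hr.le] at h
  rw [h]
  have : ((((π * x ^ 2) ^ (-a) : ℝ) : ℂ) / 2 * (macdonaldR a ((π * x ^ 2) ^ 2) : ℂ)) =
      (((π * x ^ 2) ^ (-a) / 2 * macdonaldR a ((π * x ^ 2) ^ 2) : ℝ) : ℂ) := by push_cast; rfl
  rw [this, Complex.ofReal_re]

/-! ### The kernel `g` -/

/-- **Formula (3.8) and its consequences.** For `s ∈ (1,3)`, the function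
`g(x) = x^{1-s/2} K_{(s-2)/4}(2πx²)` on `(0,∞)` satisfies
`-g'(x) = [4π x^{1-s}] · [x^{(s+2)/2} K_{(s+2)/4}(2πx²)]`; the function `-g'` (being a
product of positive decreasing functions) is positive and decreasing on `(0,∞)`, and `g`
is positive, decreasing and convex on `(0,∞)`. -/
theorem besselK_kernel_convex (s : ℝ) (hs : s ∈ Set.Ioo (1 : ℝ) 3)
    (g h : ℝ → ℝ)
    (hg : ∀ x : ℝ, g x =
      x ^ (1 - s / 2) * (besselK (((s - 2) / 4 : ℝ) : ℂ) ((2 * Real.pi * x ^ 2 : ℝ) : ℂ)).re)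
    (hh : ∀ x : ℝ, h x =
      (4 * Real.pi * x ^ (1 - s)) *
        (x ^ ((s + 2) / 2) * (besselK (((s + 2) / 4 : ℝ) : ℂ) ((2 * Real.pi * x ^ 2 : ℝ) : ℂ)).re)) :
    (∀ x ∈ Set.Ioi (0 : ℝ), HasDerivAt g (-(h x)) x) ∧
    (∀ x ∈ Set.Ioi (0 : ℝ), 0 < h x) ∧
    AntitoneOn h (Set.Ioi (0 : ℝ)) ∧
    (∀ x ∈ Set.Ioi (0 : ℝ), 0 < g x) ∧
    AntitoneOn g (Set.Ioi (0 : ℝ)) ∧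
    ConvexOn ℝ (Set.Ioi (0 : ℝ)) g := by
  set ν := (s - 2) / 4 with hν
  have hs' : s = 4 * ν + 2 := by rw [hν]; ring
  have hsq : ∀ x : ℝ, 0 < x → ∀ a : ℝ, (π * x ^ 2) ^ a = π ^ a * x ^ (2 * a) := fun x hx a => by
    rw [Real.mul_rpow Real.pi_pos.le (by positivity), ← Real.rpow_natCast, ← Real.rpow_mul hx.le]
    norm_num
  have hsq2 : ∀ x : ℝ, 0 < x → ∀ a : ℝ, ((π * x ^ 2) ^ 2) ^ a = π ^ (2 * a) * x ^ (4 * a) :=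
      fun x hx a => by
    rw [← Real.rpow_natCast, ← Real.rpow_mul (by positivity), hsq x hx]
    push_cast
    ring_nf
  have hg' : ∀ x : ℝ, 0 < x → g x = π ^ ν / 2 * macdonaldR (-ν) ((π * x ^ 2) ^ 2) := by
    intro x hx
    rw [hg, besselK_re_eq _ hx, macdonaldR_reflect ν (by positivity), hsq x hx, hsq2 x hx]
    have e1 : x ^ (1 - s / 2) * (x ^ (2 * -ν) * x ^ (4 * ν)) = 1 := by
      rw [← Real.rpow_add hx, ← Real.rpow_add hx, hs']
      ring_nf
      simp
    have e2 : π ^ (-ν) * π ^ (2 * ν) = π ^ ν := by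
      rw [← Real.rpow_add Real.pi_pos]; ring_nf
    rw [← e2]
    linear_combination (π ^ (-ν) * π ^ (2 * ν) / 2 * macdonaldR (-ν) ((π * x ^ 2) ^ 2)) * e1
  have hh' : ∀ x : ℝ, 0 < x →
      h x = 2 * π ^ (-ν) * x ^ (-(s - 1)) * macdonaldR (ν + 1) ((π * x ^ 2) ^ 2) := by
    intro x hx
    have e0 : (s + 2) / 4 = ν + 1 := by rw [hν]; ring
    rw [hh, e0, besselK_re_eq _ hx, hsq x hx]
    have e1 : x ^ ((s + 2) / 2) * x ^ (2 * -(ν + 1)) = 1 := by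
      rw [← Real.rpow_add hx, hs']
      ring_nf
      simp
    have e2 : π * π ^ (-(ν + 1)) = π ^ (-ν) := by
      nth_rewrite 1 [← Real.rpow_one π]
      rw [← Real.rpow_add Real.pi_pos]; ring_nf
    have e3 : -(s - 1) = 1 - s := by ring
    rw [← e2, e3]
    linear_combination (2 * π * π ^ (-(ν + 1)) * x ^ (1 - s) *
      macdonaldR (ν + 1) ((π * x ^ 2) ^ 2)) * e1
  have hderiv : ∀ x ∈ Set.Ioi (0 : ℝ), HasDerivAt g (-(h x)) x := by
    intro x (hx : 0 < x)
    have hin : HasDerivAt (fun x : ℝ => (π * x ^ 2) ^ 2) (4 * π ^ 2 * x ^ 3) x :=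
      ((((hasDerivAt_id x).pow 2).const_mul π).pow 2).congr_deriv (by simp; ring)
    have hc := ((hasDerivAt_macdonaldR (-ν) (by positivity : 0 < (π * x ^ 2) ^ 2)).comp x
      hin).const_mul (π ^ ν / 2)
    have hev : g =ᶠ[nhds x] fun x => π ^ ν / 2 * macdonaldR (-ν) ((π * x ^ 2) ^ 2) := by
      filter_upwards [Ioi_mem_nhds hx] with u hu using hg' u hu
    refine (hc.congr_of_eventuallyEq hev).congr_deriv ?_
    have e0 : -ν - 1 = -(ν + 1) := by ring
    rw [hh' x hx, macdonaldR_reflect (ν + 1) (by positivity), hsq2 x hx, e0]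
    have e1 : x ^ (-(s - 1)) * x ^ (4 * (ν + 1)) = x ^ 3 := by
      rw [← Real.rpow_add hx, ← Real.rpow_natCast, hs']
      push_cast
      ring_nf
    have e2 : π ^ (-ν) * π ^ (2 * (ν + 1)) = π ^ ν * π ^ 2 := by
      rw [← Real.rpow_natCast, ← Real.rpow_add Real.pi_pos, ← Real.rpow_add Real.pi_pos]
      push_cast
      ring_nf
    linear_combination (2 * π ^ (-ν) * π ^ (2 * (ν + 1)) *
      macdonaldR (-(ν + 1)) ((π * x ^ 2) ^ 2)) * e1 +
      (2 * x ^ 3 * macdonaldR (-(ν + 1)) ((π * x ^ 2) ^ 2)) * e2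
  have hpos : ∀ x ∈ Set.Ioi (0 : ℝ), 0 < h x := by
    intro x (hx : 0 < x)
    rw [hh' x hx]
    have := macdonaldR_pos (ν + 1) (by positivity : 0 < (π * x ^ 2) ^ 2)
    positivity
  have hanti : AntitoneOn h (Set.Ioi (0 : ℝ)) := by
    intro x (hx : 0 < x) y (hy : 0 < y) hxy
    rw [hh' x hx, hh' y hy]
    have h1 : y ^ (-(s - 1)) ≤ x ^ (-(s - 1)) :=
      Real.rpow_le_rpow_of_nonpos hx hxy (by linarith [hs.1])
    have h2 : macdonaldR (ν + 1) ((π * y ^ 2) ^ 2) ≤ macdonaldR (ν + 1) ((π * x ^ 2) ^ 2) :=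
      macdonaldR_anti _ (by positivity) (by gcongr)
    have h3 := (macdonaldR_pos (ν + 1) (by positivity : 0 < (π * y ^ 2) ^ 2)).le
    gcongr
  refine ⟨hderiv, hpos, hanti, ?_, ?_, ?_⟩
  · intro x (hx : 0 < x)
    rw [hg' x hx]
    have := macdonaldR_pos (-ν) (by positivity : 0 < (π * x ^ 2) ^ 2)
    positivity
  · intro x (hx : 0 < x) y (hy : 0 < y) hxy
    rw [hg' x hx, hg' y hy]
    have h2 : macdonaldR (-ν) ((π * y ^ 2) ^ 2) ≤ macdonaldR (-ν) ((π * x ^ 2) ^ 2) :=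
      macdonaldR_anti _ (by positivity) (by gcongr)
    gcongr
  · refine MonotoneOn.convexOn_of_deriv (convex_Ioi 0)
      (fun x hx => (hderiv x hx).continuousAt.continuousWithinAt) ?_ ?_
    · rw [interior_Ioi]
      exact fun x hx => (hderiv x hx).differentiableAt.differentiableWithinAt
    · rw [interior_Ioi]
      intro x hx y hy hxy
      rw [(hderiv x hx).deriv, (hderiv y hy).deriv]
      exact neg_le_neg (hanti hx hy hxy)
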